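/- Let V ⊆ ℂⁿ be a connected open set, y⁰ ∈ V, and r ≥ 1. Suppose τ, σ : V → ℂ^m are analytic maps that both satisfy the 'solved' linear system: for every j = 1,…,m and every multi-index γ with |γ| = r, ∂^γ τ^j = ∑_{k=1}^m ∑_{|δ| ≤ r−1} b^{jγ}_{kδ}(y) ∂^δ τ^k on V (and the same equations with τ replaced by σ), where all coefficients b^{jγ}_{kδ} are analytic on V. If ∂^δ τ(y⁰) = ∂^δ σ(y⁰) for every multi-index δ with |δ| ≤ r − 1, then τ = σ on V. -/

import Mathlib

/-!
Let `U` collect the differences `∂^δ τ^j - ∂^δ σ^j` for `|δ| < r`. Since partial derivatives of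
analytic functions commute, every `∂_i U` is, component by component, either a component of `U`
(when `|δ| + 1 < r`) or, by the solved system, a linear combination of components of `U` with
analytic coefficients (when `|δ| + 1 = r`). The coefficients are bounded near `y⁰`, so on a ball
around `y⁰` one has `‖dU(y) v‖ ≤ K ‖v‖ ‖U(y)‖`. As `U(y⁰) = 0`, Grönwall's inequality along the
segments issuing from `y⁰` gives `U = 0` on that ball (`eventually_zero_of_fderiv_bound`). In
particular `τ = σ` near `y⁰`, and the identity theorem extends this to the connected set `V`.
-/

/-- The partial derivative of `f : ℂⁿ → ℂ` in the `i`-th coordinate direction. -/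
noncomputable def pdi {n : ℕ} (i : Fin n) (f : (Fin n → ℂ) → ℂ) : (Fin n → ℂ) → ℂ :=
  fun y => fderiv ℂ f y (Pi.single i 1)

/-- The iterated partial derivative `∂^α f` of `f : ℂⁿ → ℂ` associated with the
multi-index `α : Fin n → ℕ` (the `i`-th coordinate derivative taken `α i` times). -/
noncomputable def mpd {n : ℕ} (α : Fin n → ℕ) (f : (Fin n → ℂ) → ℂ) : (Fin n → ℂ) → ℂ :=
  (List.finRange n).foldr (fun i g => (pdi i)^[α i] g) f

/-- The finite set of multi-indices in `n` variables of total degree `< d`. -/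
def degLt (n d : ℕ) : Finset (Fin n → ℕ) :=
  (Finset.Iic (fun _ => d)).filter (fun δ => ∑ i, δ i < d)

section PartialDerivatives

variable {n : ℕ} {V : Set (Fin n → ℂ)}

lemma pdi_congr (hV : IsOpen V) (i : Fin n) {f g : (Fin n → ℂ) → ℂ} (h : Set.EqOn f g V) :
    Set.EqOn (pdi i f) (pdi i g) V := by
  intro y hy
  have : f =ᶠ[nhds y] g := by
    filter_upwards [hV.mem_nhds hy] with z hz using h hz
  simp only [pdi, this.fderiv_eq]

lemma pdi_analytic (i : Fin n) {f : (Fin n → ℂ) → ℂ} (hf : AnalyticOnNhd ℂ f V) :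
    AnalyticOnNhd ℂ (pdi i f) V := fun y hy =>
  ((ContinuousLinearMap.apply ℂ ℂ (Pi.single i (1 : ℂ) : Fin n → ℂ)).analyticAt _).comp
    (hf.fderiv y hy)

lemma pdi_iter_analytic (i : Fin n) (k : ℕ) {f : (Fin n → ℂ) → ℂ} (hf : AnalyticOnNhd ℂ f V) :
    AnalyticOnNhd ℂ ((pdi i)^[k] f) V := by
  induction k with
  | zero => exact hf
  | succ k ih => rw [Function.iterate_succ_apply']; exact pdi_analytic i ih

lemma pdi_pdi_apply (i j : Fin n) {f : (Fin n → ℂ) → ℂ} {y : Fin n → ℂ}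
    (hf : AnalyticAt ℂ f y) :
    pdi i (pdi j f) y = fderiv ℂ (fderiv ℂ f) y (Pi.single i 1) (Pi.single j 1) := by
  have h : HasFDerivAt (fderiv ℂ f) (fderiv ℂ (fderiv ℂ f) y) y :=
    hf.fderiv.differentiableAt.hasFDerivAt
  have h2 := ((ContinuousLinearMap.apply ℂ ℂ
    (Pi.single j (1 : ℂ) : Fin n → ℂ)).hasFDerivAt).comp y h
  have h3 : pdi j f =
      (ContinuousLinearMap.apply ℂ ℂ (Pi.single j (1 : ℂ) : Fin n → ℂ)) ∘ fderiv ℂ f := rfl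
  rw [h3]
  unfold pdi
  rw [h2.fderiv]
  rfl

lemma pdi_comm (i j : Fin n) {f : (Fin n → ℂ) → ℂ} (hf : AnalyticOnNhd ℂ f V) :
    Set.EqOn (pdi i (pdi j f)) (pdi j (pdi i f)) V := by
  intro y hy
  rw [pdi_pdi_apply i j (hf y hy), pdi_pdi_apply j i (hf y hy)]
  have : IsSymmSndFDerivAt ℂ f y :=
    (hf y hy).contDiffAt.isSymmSndFDerivAt_of_omega
  exact this.eq _ _

lemma pdi_iter_comm (hV : IsOpen V) (i j : Fin n) (k : ℕ) {f : (Fin n → ℂ) → ℂ}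
    (hf : AnalyticOnNhd ℂ f V) :
    Set.EqOn (pdi i ((pdi j)^[k] f)) ((pdi j)^[k] (pdi i f)) V := by
  induction k with
  | zero => exact fun _ _ => rfl
  | succ k ih =>
    rw [Function.iterate_succ_apply', Function.iterate_succ_apply']
    exact (pdi_comm i j (pdi_iter_analytic j k hf)).trans (pdi_congr hV j ih)

lemma pdi_iter_congr (hV : IsOpen V) (i : Fin n) (k : ℕ) {f g : (Fin n → ℂ) → ℂ}
    (h : Set.EqOn f g V) : Set.EqOn ((pdi i)^[k] f) ((pdi i)^[k] g) V := by
  induction k with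
  | zero => exact h
  | succ k ih =>
    rw [Function.iterate_succ_apply', Function.iterate_succ_apply']
    exact pdi_congr hV i ih

lemma foldr_pdi_analytic (α : Fin n → ℕ) (L : List (Fin n)) {f : (Fin n → ℂ) → ℂ}
    (hf : AnalyticOnNhd ℂ f V) :
    AnalyticOnNhd ℂ (L.foldr (fun i g => (pdi i)^[α i] g) f) V := by
  induction L with
  | nil => exact hf
  | cons a L ih => exact pdi_iter_analytic a _ ih

lemma mpd_analytic (α : Fin n → ℕ) {f : (Fin n → ℂ) → ℂ} (hf : AnalyticOnNhd ℂ f V) :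
    AnalyticOnNhd ℂ (mpd α f) V := foldr_pdi_analytic α _ hf

/-- Prepending `∂_i` to the ordered product of derivatives raises the exponent of `i` by one:
`∂_i` is moved past the factors of `L` until it meets the unique factor with index `i`. -/
lemma pdi_foldr (hV : IsOpen V) (i : Fin n) (α : Fin n → ℕ) (L : List (Fin n)) (hL : L.Nodup)
    (hi : i ∈ L) {f : (Fin n → ℂ) → ℂ} (hf : AnalyticOnNhd ℂ f V) :
    Set.EqOn (pdi i (L.foldr (fun i g => (pdi i)^[α i] g) f))
      (L.foldr (fun j g => (pdi j)^[(α + Pi.single i 1 : Fin n → ℕ) j] g) f) V := by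
  induction L with
  | nil => simp at hi
  | cons a L ih =>
    rw [List.nodup_cons] at hL
    simp only [List.foldr_cons]
    by_cases ha : i = a
    · subst ha
      have hrest : L.foldr (fun j g => (pdi j)^[(α + Pi.single i 1 : Fin n → ℕ) j] g) f
          = L.foldr (fun j g => (pdi j)^[α j] g) f := by
        apply List.foldr_ext
        intro j hj g
        have : j ≠ i := fun h => hL.1 (h ▸ hj)
        simp [this]
      rw [hrest]
      simp only [Pi.add_apply, Pi.single_eq_same, Function.iterate_succ_apply']
      exact fun _ _ => rfl
    · have hiL : i ∈ L := by simpa [ha] using hi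
      have hexp : (α + Pi.single i 1 : Fin n → ℕ) a = α a := by simp [Ne.symm ha]
      rw [hexp]
      exact (pdi_iter_comm hV i a _ (foldr_pdi_analytic α L hf)).trans
        (pdi_iter_congr hV a _ (ih hL.2 hiL))

lemma pdi_mpd (hV : IsOpen V) (i : Fin n) (α : Fin n → ℕ) {f : (Fin n → ℂ) → ℂ}
    (hf : AnalyticOnNhd ℂ f V) :
    Set.EqOn (pdi i (mpd α f)) (mpd (α + Pi.single i 1) f) V :=
  pdi_foldr hV i α _ (List.nodup_finRange n) (List.mem_finRange i) hf

lemma fderiv_eq_sum_pdi (f : (Fin n → ℂ) → ℂ) (y v : Fin n → ℂ) :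
    fderiv ℂ f y v = ∑ i, v i * pdi i f y := by
  conv_lhs => rw [pi_eq_sum_univ' v]
  simp only [map_sum, map_smul, smul_eq_mul, pdi]

lemma mem_degLt {n d : ℕ} {δ : Fin n → ℕ} : δ ∈ degLt n d ↔ ∑ i, δ i < d := by
  unfold degLt
  rw [Finset.mem_filter, Finset.mem_Iic]
  refine ⟨fun h => h.2, fun h => ⟨fun i => ?_, h⟩⟩
  exact (Finset.single_le_sum (fun j _ => Nat.zero_le (δ j)) (Finset.mem_univ i)).trans h.le

lemma mpd_zero (f : (Fin n → ℂ) → ℂ) : mpd 0 f = f := by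
  simp [mpd]

end PartialDerivatives

/-- A map whose derivative is controlled by its own value vanishes near each of its zeros, by
Grönwall's inequality along the segments issuing from the zero. -/
lemma eventually_zero_of_fderiv_bound {E F : Type*} [NormedAddCommGroup E] [NormedSpace ℂ E]
    [NormedAddCommGroup F] [NormedSpace ℂ F] {U : E → F} {y0 : E} (h0 : U y0 = 0) (K : ℝ)
    (hU : ∀ᶠ y in nhds y0, DifferentiableAt ℂ U y ∧
      ∀ v, ‖fderiv ℂ U y v‖ ≤ K * ‖v‖ * ‖U y‖) :
    ∀ᶠ y in nhds y0, U y = 0 := by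
  obtain ⟨ε, hε, hball⟩ := Metric.eventually_nhds_iff_ball.1 hU
  filter_upwards [Metric.ball_mem_nhds y0 hε] with y hy
  set p : ℝ → E := fun t => y0 + (t : ℂ) • (y - y0) with hp
  have hpball : ∀ t ∈ Set.Icc (0 : ℝ) 1, p t ∈ Metric.ball y0 ε := by
    intro t ht
    rw [mem_ball_iff_norm] at hy ⊢
    have : ‖p t - y0‖ = t * ‖y - y0‖ := by
      simp [hp, norm_smul, abs_of_nonneg ht.1]
    rw [this]
    nlinarith [ht.2, norm_nonneg (y - y0)]
  have hpd : ∀ t, HasDerivAt p (y - y0) t := by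
    intro t
    have h1 : HasDerivAt (fun t : ℝ => (t : ℂ)) 1 t := Complex.ofRealCLM.hasDerivAt
    have h2 := (h1.smul_const (y - y0)).const_add y0
    rwa [one_smul] at h2
  have hg : ∀ t ∈ Set.Icc (0 : ℝ) 1,
      HasDerivAt (fun t => U (p t)) (fderiv ℂ U (p t) (y - y0)) t := by
    intro t ht
    exact ((hball _ (hpball t ht)).1.hasFDerivAt.restrictScalars ℝ).comp_hasDerivAt t (hpd t)
  have key := eq_zero_of_abs_deriv_le_mul_abs_self_of_eq_zero_right
    (f := fun t => U (p t)) (f' := fun t => fderiv ℂ U (p t) (y - y0)) (K := K * ‖y - y0‖)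
    (a := 0) (b := 1)
    (fun t ht => (hg t ht).continuousAt.continuousWithinAt)
    (fun t ht => (hg t (Set.Ico_subset_Icc_self ht)).hasDerivWithinAt)
    (by simp [hp, h0])
    (fun t ht => (hball _ (hpball t (Set.Ico_subset_Icc_self ht))).2 _)
  simpa [hp] using key 1 (by simp)

/-- Let `V ⊆ ℂⁿ` be a connected open set, `y⁰ ∈ V`, and `r ≥ 1`.
Suppose `τ, σ : V → ℂ^m` are analytic maps that both satisfy the "solved" linear system
`∂^γ τ^j = ∑_{k=1}^m ∑_{|δ| ≤ r−1} b^{jγ}_{kδ}(y) ∂^δ τ^k` on `V`, for every `j` and every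
multi-index `γ` with `|γ| = r`, with all coefficients `b^{jγ}_{kδ}` analytic on `V`.
If `∂^δ τ(y⁰) = ∂^δ σ(y⁰)` for every multi-index `δ` with `|δ| ≤ r − 1`, then `τ = σ` on `V`. -/
theorem solved_system_unique_solution
    (n m r : ℕ) (hr : 1 ≤ r)
    (V : Set (Fin n → ℂ)) (hVopen : IsOpen V) (hVconn : IsConnected V)
    (y0 : Fin n → ℂ) (hy0 : y0 ∈ V)
    (b : Fin m → (Fin n → ℕ) → Fin m → (Fin n → ℕ) → (Fin n → ℂ) → ℂ)
    (hb : ∀ j γ k δ, AnalyticOnNhd ℂ (b j γ k δ) V)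
    (τ σ : (Fin n → ℂ) → Fin m → ℂ)
    (hτa : ∀ j, AnalyticOnNhd ℂ (fun y => τ y j) V)
    (hσa : ∀ j, AnalyticOnNhd ℂ (fun y => σ y j) V)
    (hτ : ∀ (j : Fin m) (γ : Fin n → ℕ), (∑ i, γ i) = r → ∀ y ∈ V,
      mpd γ (fun z => τ z j) y
        = ∑ k, ∑ δ ∈ degLt n r, b j γ k δ y * mpd δ (fun z => τ z k) y)
    (hσ : ∀ (j : Fin m) (γ : Fin n → ℕ), (∑ i, γ i) = r → ∀ y ∈ V,
      mpd γ (fun z => σ z j) y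
        = ∑ k, ∑ δ ∈ degLt n r, b j γ k δ y * mpd δ (fun z => σ z k) y)
    (h0 : ∀ δ : Fin n → ℕ, (∑ i, δ i) < r → ∀ j,
      mpd δ (fun z => τ z j) y0 = mpd δ (fun z => σ z j) y0) :
    ∀ y ∈ V, τ y = σ y := by
  classical
  set U : (Fin n → ℂ) → (Fin m × degLt n r → ℂ) := fun y q =>
    mpd q.2.1 (fun z => τ z q.1) y - mpd q.2.1 (fun z => σ z q.1) y with hUdef
  have hUa : ∀ q, AnalyticOnNhd ℂ (fun y => U y q) V := fun q =>
    (mpd_analytic _ (hτa q.1)).sub (mpd_analytic _ (hσa q.1))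
  have hUle : ∀ y j δ, ∑ i, δ i < r →
      ‖mpd δ (fun z => τ z j) y - mpd δ (fun z => σ z j) y‖ ≤ ‖U y‖ := fun y j δ hδ =>
    norm_le_pi_norm (U y) (j, ⟨δ, mem_degLt.2 hδ⟩)
  set B : (Fin n → ℂ) → ℝ := fun y =>
    ∑ j, ∑ γ ∈ degLt n (r + 1), ∑ k, ∑ δ ∈ degLt n r, ‖b j γ k δ y‖ with hBdef
  have hBc : ContinuousAt B y0 := by
    refine tendsto_finsetSum _ fun j _ => tendsto_finsetSum _ fun γ _ =>
      tendsto_finsetSum _ fun k _ => tendsto_finsetSum _ fun δ _ => ?_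
    exact (hb j γ k δ y0 hy0).continuousAt.norm
  have hB0 : ∀ y, 0 ≤ B y := fun y => by positivity
  have hpU : ∀ y ∈ V, ∀ q i, ‖pdi i (fun y => U y q) y‖ ≤ (B y + 1) * ‖U y‖ := by
    rintro y hy ⟨j, δ, hδ⟩ i
    have hδ' := mem_degLt.1 hδ
    have hsub : pdi i (fun y => U y (j, ⟨δ, hδ⟩)) y
        = mpd (δ + Pi.single i 1) (fun z => τ z j) y
          - mpd (δ + Pi.single i 1) (fun z => σ z j) y := by
      rw [← pdi_mpd hVopen i δ (hτa j) hy, ← pdi_mpd hVopen i δ (hσa j) hy]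
      simp only [pdi, hUdef]
      rw [fderiv_fun_sub (mpd_analytic _ (hτa j) y hy).differentiableAt
        (mpd_analytic _ (hσa j) y hy).differentiableAt]
      rfl
    have hdeg : ∑ l, (δ + Pi.single i 1 : Fin n → ℕ) l = ∑ l, δ l + 1 := by
      simp [Finset.sum_add_distrib]
    rw [hsub]
    by_cases hlt : ∑ l, δ l + 1 < r
    · refine (hUle y j _ (hdeg ▸ hlt)).trans ?_
      nlinarith [hB0 y, norm_nonneg (U y)]
    · have hγ : ∑ l, (δ + Pi.single i 1 : Fin n → ℕ) l = r := by omega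
      rw [hτ j _ hγ y hy, hσ j _ hγ y hy]
      simp only [← Finset.sum_sub_distrib, ← mul_sub]
      set γ := δ + Pi.single i 1
      have h1 : ‖∑ k, ∑ δ ∈ degLt n r, b j γ k δ y *
          (mpd δ (fun z => τ z k) y - mpd δ (fun z => σ z k) y)‖
          ≤ (∑ k, ∑ δ ∈ degLt n r, ‖b j γ k δ y‖) * ‖U y‖ := by
        simp only [Finset.sum_mul]
        refine norm_sum_le_of_le _ fun k _ => norm_sum_le_of_le _ fun ε hε => ?_
        rw [norm_mul]
        exact mul_le_mul_of_nonneg_left (hUle y k ε (mem_degLt.1 hε)) (norm_nonneg _)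
      have h2 : ∑ k, ∑ δ ∈ degLt n r, ‖b j γ k δ y‖ ≤ B y := by
        refine le_trans ?_ (Finset.single_le_sum (f := fun j => ∑ γ ∈ degLt n (r + 1), ∑ k,
          ∑ δ ∈ degLt n r, ‖b j γ k δ y‖) (fun _ _ => by positivity) (Finset.mem_univ j))
        exact Finset.single_le_sum (f := fun γ => ∑ k, ∑ δ ∈ degLt n r, ‖b j γ k δ y‖)
          (fun _ _ => by positivity) (mem_degLt.2 (by omega))
      refine h1.trans (mul_le_mul_of_nonneg_right (by linarith) (norm_nonneg _))
  have hUzero : ∀ᶠ y in nhds y0, U y = 0 := by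
    refine eventually_zero_of_fderiv_bound ?_ (n * (B y0 + 2)) ?_
    · funext ⟨j, δ, hδ⟩
      simp [hUdef, h0 δ (mem_degLt.1 hδ) j]
    · filter_upwards [hVopen.mem_nhds hy0,
        hBc.eventually (gt_mem_nhds (lt_add_one (B y0)))] with y hy hBy
      have hd : ∀ q, DifferentiableAt ℂ (fun y => U y q) y := fun q =>
        (hUa q y hy).differentiableAt
      refine ⟨differentiableAt_pi.2 hd, fun v => ?_⟩
      have hK : 0 ≤ B y0 + 2 := by linarith [hB0 y0]
      refine (pi_norm_le_iff_of_nonneg (by positivity)).2 fun q => ?_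
      have hcomp : fderiv ℂ U y v q = fderiv ℂ (fun y => U y q) y v := by
        rw [show fderiv ℂ U y = _ from fderiv_pi hd]
        rfl
      rw [hcomp, fderiv_eq_sum_pdi]
      have : ∀ i ∈ (Finset.univ : Finset (Fin n)), ‖v i * pdi i (fun y => U y q) y‖
          ≤ ‖v‖ * ((B y0 + 2) * ‖U y‖) := by
        intro i _
        rw [norm_mul]
        refine mul_le_mul (norm_le_pi_norm v i) ((hpU y hy q i).trans ?_) (norm_nonneg _)
          (norm_nonneg _)
        exact mul_le_mul_of_nonneg_right (by linarith) (norm_nonneg _)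
      refine (norm_sum_le_of_le _ this).trans (le_of_eq ?_)
      simp only [Finset.sum_const, Finset.card_univ, Fintype.card_fin, nsmul_eq_mul]
      ring
  intro y hy
  funext j
  refine (hτa j).eqOn_of_preconnected_of_eventuallyEq (hσa j) hVconn.isPreconnected hy0 ?_ hy
  filter_upwards [hUzero] with z hz
  -- The component of `U` with `δ = 0` is `τ - σ`; it exists because `1 ≤ r`.
  have := congrFun hz (j, ⟨0, mem_degLt.2 (by simpa using Nat.lt_of_lt_of_le Nat.one_pos hr)⟩)
  simpa [hUdef, mpd_zero, sub_eq_zero] using this
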